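/- arXiv:1602.01286 — 7 statements merged into one kernel-verified Lean document; each statement's English description precedes it below -/
import Mathlib

section
/- There exist constants C > 0 and n₀ such that for every integer n ≥ n₀ and every set S ⊆ Z̃_n of cardinality k ≥ 1, there exists a set D ⊆ Z_n with Z_n = D ∪ (D + S) (i.e., D is a dominating set of the circulant graph C_n(S)) satisfying #D ≤ C · n (log n)^{5/2} / (k^{1/2} · log log n). -/
/-- Averaging: some translate of `S` meets `U` in at least `#U * #S / n` points. -/
lemma exists_translate_large (n : ℕ) [NeZero n] (S U : Finset (ZMod n)) :
    ∃ d : ZMod n, U.card * S.card ≤ n * (U.filter (fun u => u - d ∈ S)).card := by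
  classical
  by_contra! h
  have h1 : ∑ d : ZMod n, (U.filter (fun u => u - d ∈ S)).card = U.card * S.card := by
    simp_rw [Finset.card_filter]
    rw [Finset.sum_comm]
    rw [Finset.sum_const_nat (m := S.card)]
    intro u _
    rw [← Finset.card_filter]
    refine Finset.card_bij (fun d _ => u - d) ?_ ?_ ?_
    · intro a ha; simpa using ha
    · intro a _ b _ hab; simpa using hab
    · intro b hb; exact ⟨u - b, by simpa using hb, by simp⟩
  have h2 : ∑ d : ZMod n, n * (U.filter (fun u => u - d ∈ S)).card
      < ∑ _d : ZMod n, U.card * S.card :=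
    Finset.sum_lt_sum_of_nonempty Finset.univ_nonempty (fun d _ => h d)
  rw [← Finset.mul_sum, h1] at h2
  simp [ZMod.card] at h2

/-- Greedy covering. -/
lemma greedy_cover (n : ℕ) [NeZero n] (S : Finset (ZMod n)) (r : ℝ) (hr : 0 < r)
    (hrS : r * r = S.card) : ∀ (m : ℕ) (U : Finset (ZMod n)), U.card ≤ m →
      ∃ D : Finset (ZMod n), (∀ v ∈ U, v ∈ D ∨ ∃ d ∈ D, ∃ s ∈ S, v = d + s) ∧
        (D.card : ℝ) * r ≤ U.card + n := by
  classical
  intro m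
  induction m with
  | zero =>
    intro U hU
    refine ⟨∅, ?_, ?_⟩
    · have : U = ∅ := by simpa using hU
      simp [this]
    · simp; positivity
  | succ m ih =>
    intro U hU
    by_cases hc : (U.card : ℝ) * r ≤ n
    · refine ⟨U, fun v hv => Or.inl hv, ?_⟩
      have : (0 : ℝ) ≤ U.card := by positivity
      linarith
    · push Not at hc
      obtain ⟨d, hd⟩ := exists_translate_large n S U
      set F := U.filter (fun u => u - d ∈ S) with hF
      have hn : (0 : ℝ) < n := by exact_mod_cast Nat.pos_of_ne_zero (NeZero.ne n)
      have hd' : (U.card : ℝ) * S.card ≤ n * F.card := by exact_mod_cast hd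
      have hlt : r < F.card := by
        have : (n : ℝ) * r < n * F.card := by
          calc (n : ℝ) * r < U.card * r * r := by gcongr
            _ = U.card * S.card := by rw [mul_assoc, hrS]
            _ ≤ _ := hd'
        exact lt_of_mul_lt_mul_left this hn.le
      have hFpos : 0 < F.card := by
        have : (0 : ℝ) < F.card := hr.trans hlt
        exact_mod_cast this
      have hsub : F ⊆ U := Finset.filter_subset _ _
      have hcard : (U \ F).card + F.card = U.card := Finset.card_sdiff_add_card_eq_card hsub
      obtain ⟨D, hD, hDc⟩ := ih (U \ F) (by omega)
      refine ⟨insert d D, ?_, ?_⟩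
      · intro v hv
        by_cases hvF : v ∈ F
        · exact Or.inr ⟨d, by simp, v - d, (Finset.mem_filter.1 hvF).2, by ring⟩
        · rcases hD v (Finset.mem_sdiff.2 ⟨hv, hvF⟩) with h | ⟨e, he, s, hs, hh⟩
          · exact Or.inl (Finset.mem_insert_of_mem h)
          · exact Or.inr ⟨e, Finset.mem_insert_of_mem he, s, hs, hh⟩
      · have h1 : ((insert d D).card : ℝ) ≤ D.card + 1 := by
          exact_mod_cast Finset.card_insert_le d D
        have h2 : ((U \ F).card : ℝ) + F.card = U.card := by exact_mod_cast hcard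
        nlinarith

/-- There exist `C > 0` and `n₀` such that for every `n ≥ n₀` and every
nonempty set `S` of nonzero residues mod `n` (of cardinality `k = #S ≥ 1`), there is a
dominating set `D` of the circulant graph `C_n(S)` with
`#D ≤ C · n (log n)^{5/2} / (k^{1/2} · log log n)`. -/
theorem exists_small_dominating_set :
    ∃ C : ℝ, C > 0 ∧ ∃ n₀ : ℕ, ∀ n : ℕ, n₀ ≤ n →
      ∀ S : Finset (ZMod n), (0 : ZMod n) ∉ S → S.Nonempty →
        ∃ D : Finset (ZMod n),
          (∀ v : ZMod n, v ∈ D ∨ ∃ d ∈ D, ∃ s ∈ S, v = d + s) ∧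
          (D.card : ℝ) ≤ C * n * (Real.log n) ^ ((5 : ℝ) / 2) /
              ((S.card : ℝ) ^ ((1 : ℝ) / 2) * Real.log (Real.log n)) := by
  refine ⟨2, by norm_num, 3, ?_⟩
  intro n hn S _ hS
  haveI : NeZero n := ⟨by omega⟩
  have hk : (0 : ℝ) < S.card := by exact_mod_cast hS.card_pos
  have hr : (0 : ℝ) < (S.card : ℝ) ^ ((1 : ℝ) / 2) := Real.rpow_pos_of_pos hk _
  have hrr : (S.card : ℝ) ^ ((1 : ℝ) / 2) * (S.card : ℝ) ^ ((1 : ℝ) / 2) = S.card := by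
    rw [← Real.rpow_add hk]; norm_num
  obtain ⟨D, hD, hDc⟩ := greedy_cover n S _ hr hrr _ Finset.univ le_rfl
  refine ⟨D, fun v => hD v (Finset.mem_univ v), ?_⟩
  rw [Finset.card_univ, ZMod.card] at hDc
  have hn3 : (3 : ℝ) ≤ n := by exact_mod_cast hn
  have hlog : 1 < Real.log n := by
    rw [Real.lt_log_iff_exp_lt (by linarith)]
    have := Real.exp_one_lt_d9
    linarith
  have hll : 0 < Real.log (Real.log n) := Real.log_pos hlog
  have h1 : Real.log (Real.log n) ≤ (Real.log n) ^ ((5 : ℝ) / 2) := by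
    calc Real.log (Real.log n) ≤ Real.log n := Real.log_le_self (by linarith)
      _ = (Real.log n) ^ (1 : ℝ) := (Real.rpow_one _).symm
      _ ≤ _ := Real.rpow_le_rpow_of_exponent_le hlog.le (by norm_num)
  rw [le_div_iff₀ (mul_pos hr hll), ← mul_assoc]
  have h2 : (D.card : ℝ) * (S.card : ℝ) ^ ((1 : ℝ) / 2) ≤ 2 * n := by linarith
  exact mul_le_mul h2 h1 hll.le (by linarith)
end

section
/- There exist constants C > 0, C' > 0 and n₀ such that for every integer n ≥ n₀ and every integer k with n ≥ k ≥ C · n^{1/2} (log n)^{3} / log log n, there exists a set D₂ ⊆ Z_n of cardinality #D₂ ≤ C' · n^{2} (log n)^{5} / (k^{2} (log log n)^{2}) which is a 2-dominating set for every circulant graph C_n(S) with S ⊆ Z̃_n and #S ≥ k; that is, for every such S, Z_n = D₂ ∪ (D₂ + S) ∪ (D₂ + S + S). In particular, the set D₂ does not depend on S. -/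
/-- Hoeffding-type pointwise bound. -/
lemma exp_mul_le_cosh_add (t x : ℝ) (h1 : -1 ≤ x) (h2 : x ≤ 1) :
    Real.exp (t * x) ≤ Real.cosh t + x * Real.sinh t := by
  have h := convexOn_exp.2 (Set.mem_univ t) (Set.mem_univ (-t))
    (show (0:ℝ) ≤ (1 + x) / 2 by linarith) (show (0:ℝ) ≤ (1 - x) / 2 by linarith) (by ring)
  simp only [smul_eq_mul] at h
  rw [Real.cosh_eq, Real.sinh_eq]
  have e : (1 + x) / 2 * t + (1 - x) / 2 * -t = t * x := by ring
  rw [e] at h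
  linarith

/-- Derandomised choice of `m` points: the exponential potential stays small. -/
lemma exists_points {G ι : Type*} [Fintype G] [Nonempty G] (I : Finset ι) (f : ι → G → ℝ)
    (hf1 : ∀ i ∈ I, ∀ x, -1 ≤ f i x) (hf2 : ∀ i ∈ I, ∀ x, f i x ≤ 1)
    (hf0 : ∀ i ∈ I, ∑ x, f i x = 0) (t : ℝ) (m : ℕ) :
    ∃ x : Fin m → G, ∑ i ∈ I, Real.exp (t * ∑ j, f i (x j)) ≤
      (I.card : ℝ) * Real.exp (t ^ 2 / 2) ^ m := by
  induction m with
  | zero => exact ⟨Fin.elim0, by simp⟩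
  | succ m ih =>
    obtain ⟨x, hx⟩ := ih
    have key : ∑ y : G, ∑ i ∈ I, Real.exp (t * ∑ j, f i (x j)) * Real.exp (t * f i y) ≤
        ∑ _y : G, (I.card : ℝ) * Real.exp (t ^ 2 / 2) ^ (m + 1) := by
      rw [Finset.sum_comm]
      calc _ ≤ ∑ i ∈ I, Real.exp (t * ∑ j, f i (x j)) *
            ((Fintype.card G : ℝ) * Real.exp (t ^ 2 / 2)) := by
            refine Finset.sum_le_sum fun i hi => ?_
            rw [← Finset.mul_sum]
            refine mul_le_mul_of_nonneg_left ?_ (Real.exp_pos _).le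
            calc ∑ y, Real.exp (t * f i y) ≤ ∑ y, (Real.cosh t + f i y * Real.sinh t) :=
                  Finset.sum_le_sum fun y _ =>
                    exp_mul_le_cosh_add t _ (hf1 i hi y) (hf2 i hi y)
              _ = (Fintype.card G : ℝ) * Real.cosh t := by
                  rw [Finset.sum_add_distrib, ← Finset.sum_mul, hf0 i hi]; simp
              _ ≤ _ := mul_le_mul_of_nonneg_left (Real.cosh_le_exp_half_sq t) (by positivity)
        _ = (Fintype.card G : ℝ) * Real.exp (t ^ 2 / 2) *
              ∑ i ∈ I, Real.exp (t * ∑ j, f i (x j)) := by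
            rw [← Finset.sum_mul, mul_comm]
        _ ≤ (Fintype.card G : ℝ) * Real.exp (t ^ 2 / 2) *
              ((I.card : ℝ) * Real.exp (t ^ 2 / 2) ^ m) :=
            mul_le_mul_of_nonneg_left hx (by positivity)
        _ = _ := by simp; ring
    obtain ⟨y, -, hy⟩ := Finset.exists_le_of_sum_le Finset.univ_nonempty key
    refine ⟨Fin.cons y x, le_trans (le_of_eq ?_) hy⟩
    refine Finset.sum_congr rfl fun i _ => ?_
    rw [Fin.sum_univ_succ, ← Real.exp_add]
    simp only [Fin.cons_zero, Fin.cons_succ]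
    congr 1; ring

/-- Points with uniformly small character sums. -/
lemma exists_points_char {G : Type*} [AddCommGroup G] [Fintype G] (t : ℝ) (ht : 0 < t) (m : ℕ) :
    ∃ x : Fin m → G, ∀ ψ : AddChar G ℂ, ψ ≠ 0 →
      ‖∑ j, ψ (x j)‖ ≤ 2 * (Real.log (4 * Fintype.card G) / t + m * t / 2) := by
  classical
  let c : Fin 4 → ℂ := ![1, -1, Complex.I, -Complex.I]
  have hc : ∀ a, ‖c a‖ = 1 := by intro a; fin_cases a <;> simp [c]
  let f : AddChar G ℂ × Fin 4 → G → ℝ := fun i x => (c i.2 * i.1 x).re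
  let J : Finset (AddChar G ℂ × Fin 4) := (Finset.univ.filter (· ≠ 0)) ×ˢ Finset.univ
  have habs : ∀ i x, |f i x| ≤ 1 := by
    intro i x
    refine (Complex.abs_re_le_norm _).trans ?_
    rw [norm_mul, hc, AddChar.norm_apply]; simp
  obtain ⟨x, hx⟩ := exists_points J f (fun i _ x => (abs_le.1 (habs i x)).1)
    (fun i _ x => (abs_le.1 (habs i x)).2) (by
      intro i hi
      have hi' : i.1 ≠ 0 := by simpa [J] using hi
      simp only [f]
      rw [← Complex.re_sum, ← Finset.mul_sum, (AddChar.sum_eq_zero_iff_ne_zero).2 hi']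
      simp) t m
  refine ⟨x, fun ψ hψ => ?_⟩
  have hcard : (J.card : ℝ) ≤ 4 * Fintype.card G := by
    have : J.card ≤ Fintype.card G * 4 := by
      simp only [J, Finset.card_product, Finset.card_univ, Fintype.card_fin]
      refine Nat.mul_le_mul_right _ ((Finset.card_filter_le _ _).trans ?_)
      rw [Finset.card_univ, AddChar.card_eq]
    have : (J.card : ℝ) ≤ Fintype.card G * 4 := by exact_mod_cast this
    linarith
  have hG : (0:ℝ) < Fintype.card G := by exact_mod_cast Fintype.card_pos
  have hb : ∀ a, ∑ j, f (ψ, a) (x j) ≤ Real.log (4 * Fintype.card G) / t + m * t / 2 := by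
    intro a
    have h1 : Real.exp (t * ∑ j, f (ψ, a) (x j)) ≤
        4 * Fintype.card G * Real.exp (t ^ 2 / 2) ^ m := by
      refine le_trans ?_ (hx.trans (mul_le_mul_of_nonneg_right hcard (by positivity)))
      exact Finset.single_le_sum (f := fun i => Real.exp (t * ∑ j, f i (x j)))
        (fun _ _ => (Real.exp_pos _).le) (by simp [J, hψ])
    have h2 := Real.log_le_log (Real.exp_pos _) h1
    rw [Real.log_exp, Real.log_mul (by positivity) (by positivity), Real.log_pow,
      Real.log_exp] at h2
    have e : Real.log (4 * Fintype.card G) / t + m * t / 2 =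
      (Real.log (4 * Fintype.card G) + m * (t ^ 2 / 2)) / t := by field_simp
    rw [e, le_div_iff₀ ht]
    linarith
  have hs : ∀ a, ∑ j, f (ψ, a) (x j) = (c a * ∑ j, ψ (x j)).re := by
    intro a; simp only [f]; rw [← Complex.re_sum, ← Finset.mul_sum]
  have b0 := hb 0
  have b1 := hb 1
  have b2 := hb 2
  have b3 := hb 3
  rw [hs] at b0 b1 b2 b3
  simp [c] at b0 b1 b2 b3
  refine (Complex.norm_le_abs_re_add_abs_im _).trans ?_
  have r1 : |(∑ j, ψ (x j)).re| ≤ Real.log (4 * Fintype.card G) / t + m * t / 2 := by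
    rw [Complex.re_sum]; exact abs_le.2 ⟨by linarith, by linarith⟩
  have r2 : |(∑ j, ψ (x j)).im| ≤ Real.log (4 * Fintype.card G) / t + m * t / 2 := by
    rw [Complex.im_sum]; exact abs_le.2 ⟨by linarith, by linarith⟩
  linarith

/-- Parseval for an indicator function. -/
lemma parseval_indicator {G : Type*} [AddCommGroup G] [Fintype G] (S : Finset G) :
    ∑ ψ : AddChar G ℂ, ‖∑ s ∈ S, ψ s‖ ^ 2 = (Fintype.card G : ℝ) * S.card := by
  classical
  have : ((∑ ψ : AddChar G ℂ, ‖∑ s ∈ S, ψ s‖ ^ 2 : ℝ) : ℂ) =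
      (((Fintype.card G : ℝ) * S.card : ℝ) : ℂ) := by
    push_cast
    have h : ∀ ψ : AddChar G ℂ, ((‖∑ s ∈ S, ψ s‖ : ℂ)) ^ 2 =
        ∑ s ∈ S, ∑ u ∈ S, ψ (s - u) := by
      intro ψ
      rw [← Complex.mul_conj', map_sum, Finset.sum_mul_sum]
      refine Finset.sum_congr rfl fun s _ => Finset.sum_congr rfl fun u _ => ?_
      rw [sub_eq_add_neg, AddChar.map_add_eq_mul, AddChar.map_neg_eq_conj]
    simp_rw [h]
    rw [Finset.sum_comm]
    simp_rw [Finset.sum_comm (s := Finset.univ) (t := S), AddChar.sum_apply_eq_ite, sub_eq_zero]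
    simp [mul_comm]
  exact_mod_cast this

/-- Small character sums force representation. -/
lemma exists_rep {G : Type*} [AddCommGroup G] [Fintype G] (m : ℕ) (x : Fin m → G) (lam : ℝ)
    (hl : ∀ ψ : AddChar G ℂ, ψ ≠ 0 → ‖∑ j, ψ (x j)‖ ≤ lam) (hl0 : 0 ≤ lam) (S : Finset G)
    (hS : 0 < S.card) (h : lam * Fintype.card G < m * S.card) (v : G) :
    ∃ j, ∃ s ∈ S, ∃ u ∈ S, v = x j + s + u := by
  classical
  by_contra! hno
  have h0 : ∑ ψ : AddChar G ℂ, ψ (-v) * ((∑ s ∈ S, ψ s) ^ 2 * ∑ j, ψ (x j)) = 0 := by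
    have e : ∀ ψ : AddChar G ℂ, ψ (-v) * ((∑ s ∈ S, ψ s) ^ 2 * ∑ j, ψ (x j)) =
        ∑ j, ∑ s ∈ S, ∑ u ∈ S, ψ (x j + s + u - v) := by
      intro ψ
      simp only [sub_eq_add_neg, AddChar.map_add_eq_mul, ← Finset.sum_mul, ← Finset.mul_sum]
      ring
    simp_rw [e]
    rw [Finset.sum_comm]
    refine Finset.sum_eq_zero fun j _ => ?_
    rw [Finset.sum_comm]
    refine Finset.sum_eq_zero fun s hs => ?_
    rw [Finset.sum_comm]
    refine Finset.sum_eq_zero fun u hu => ?_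
    rw [AddChar.sum_apply_eq_ite, if_neg]
    rw [sub_eq_zero]
    exact (hno j s hs u hu).symm
  rw [← Finset.add_sum_erase _ _ (Finset.mem_univ (0 : AddChar G ℂ))] at h0
  have h1 := eq_neg_of_add_eq_zero_left h0
  have h2 := congrArg norm h1
  rw [norm_neg] at h2
  simp only [AddChar.zero_apply, one_mul, Finset.sum_const, nsmul_eq_mul, mul_one,
    Finset.card_univ, Fintype.card_fin, norm_mul, norm_pow, Complex.norm_natCast] at h2
  have h3 : (S.card : ℝ) ^ 2 * m ≤ lam * (Fintype.card G * S.card) := by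
    rw [h2, ← parseval_indicator, Finset.mul_sum]
    refine (norm_sum_le _ _).trans ?_
    refine le_trans (Finset.sum_le_sum (g := fun ψ : AddChar G ℂ => lam * ‖∑ s ∈ S, ψ s‖ ^ 2)
      fun ψ hψ => ?_) (Finset.sum_le_sum_of_subset_of_nonneg (Finset.erase_subset _ _)
        fun _ _ _ => by positivity)
    rw [norm_mul, norm_mul, norm_pow, AddChar.norm_apply, one_mul, mul_comm]
    exact mul_le_mul_of_nonneg_right (hl ψ (Finset.ne_of_mem_erase hψ)) (by positivity)
  have hS' : (0:ℝ) < S.card := by exact_mod_cast hS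
  nlinarith [mul_lt_mul_of_pos_right h hS']

/-- There exist `C, C' > 0` and `n₀` such that for every `n ≥ n₀` and every
integer `k` with `n ≥ k ≥ C n^{1/2} (log n)^3 / log log n`, there is a set `D₂ ⊆ Z_n` with
`#D₂ ≤ C' n² (log n)^5 / (k² (log log n)²)` which is a 2-dominating set of every circulant
graph `C_n(S)` with `S ⊆ Z̃_n`, `#S ≥ k`; i.e. `Z_n = D₂ ∪ (D₂ + S) ∪ (D₂ + S + S)`.
The set `D₂` does not depend on `S`. -/
theorem exists_universal_two_dominating_set :
    ∃ C C' : ℝ, C > 0 ∧ C' > 0 ∧ ∃ n₀ : ℕ, ∀ n : ℕ, n₀ ≤ n →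
      ∀ k : ℕ, k ≤ n →
        C * (n : ℝ) ^ ((1 : ℝ) / 2) * (Real.log n) ^ 3 / Real.log (Real.log n) ≤ (k : ℝ) →
        ∃ D : Finset (ZMod n),
          (D.card : ℝ) ≤ C' * (n : ℝ) ^ 2 * (Real.log n) ^ 5 /
              ((k : ℝ) ^ 2 * (Real.log (Real.log n)) ^ 2) ∧
          ∀ S : Finset (ZMod n), (0 : ZMod n) ∉ S → k ≤ S.card →
            ∀ v : ZMod n, v ∈ D ∨ (∃ d ∈ D, ∃ s ∈ S, v = d + s) ∨
              (∃ d ∈ D, ∃ s ∈ S, ∃ t ∈ S, v = d + s + t) := by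
  classical
  refine ⟨1, 17, one_pos, by norm_num, 4, fun n hn k hkn hk => ?_⟩
  haveI : NeZero n := ⟨by omega⟩
  have hn4 : (4:ℝ) ≤ n := by exact_mod_cast hn
  have hl4 : (1:ℝ) < Real.log 4 := by
    rw [show (4:ℝ) = 2 ^ 2 by norm_num, Real.log_pow]
    have := Real.log_two_gt_d9
    push_cast; linarith
  have hL4 : Real.log 4 ≤ Real.log n := Real.log_le_log (by norm_num) hn4
  have hL : 1 < Real.log n := by linarith
  have hLL : 0 < Real.log (Real.log n) := Real.log_pos hL
  have hLL2 : Real.log (Real.log n) ≤ Real.log n := Real.log_le_self (by linarith)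
  have hn0 : (0:ℝ) < n := by linarith
  have hk0 : (0:ℝ) < k := lt_of_lt_of_le (by positivity) hk
  have hkn' : (k:ℝ) ≤ n := by exact_mod_cast hkn
  have hlog : Real.log (4 * n) = Real.log 4 + Real.log n :=
    Real.log_mul (by norm_num) (by positivity)
  have hlog0 : 0 < Real.log (4 * n) := by linarith
  set m : ℕ := ⌊8 * (n:ℝ) ^ 2 * Real.log (4 * n) / (k:ℝ) ^ 2⌋₊ + 1 with hm
  have hm1 : 8 * (n:ℝ) ^ 2 * Real.log (4 * n) / (k:ℝ) ^ 2 < m := by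
    rw [hm]; push_cast; exact Nat.lt_floor_add_one _
  have hm2 : (m : ℝ) ≤ 8 * (n:ℝ) ^ 2 * Real.log (4 * n) / (k:ℝ) ^ 2 + 1 := by
    rw [hm]; push_cast
    have := Nat.floor_le (show 0 ≤ 8 * (n:ℝ) ^ 2 * Real.log (4 * n) / (k:ℝ) ^ 2 by positivity)
    linarith
  obtain ⟨x, hx⟩ := exists_points_char (G := ZMod n) ((k:ℝ) / (2 * n)) (by positivity) m
  rw [ZMod.card] at hx
  refine ⟨Finset.univ.image x, ?_, fun S _ hS v => Or.inr (Or.inr ?_)⟩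
  · have hc : ((Finset.univ.image x).card : ℝ) ≤ m := by
      exact_mod_cast (Finset.card_image_le).trans (by simp)
    refine hc.trans (hm2.trans ?_)
    have h1 : 8 * (n:ℝ) ^ 2 * Real.log (4 * n) / (k:ℝ) ^ 2 + 1 ≤
        17 * (n:ℝ) ^ 2 * Real.log n / (k:ℝ) ^ 2 := by
      rw [le_div_iff₀ (by positivity), add_mul, div_mul_cancel₀ _ (by positivity)]
      have a1 : (k:ℝ) ^ 2 ≤ (n:ℝ) ^ 2 := by gcongr
      have a2 : (n:ℝ) ^ 2 * 1 ≤ (n:ℝ) ^ 2 * Real.log n := by gcongr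
      have a3 : (n:ℝ) ^ 2 * Real.log (4 * n) ≤ (n:ℝ) ^ 2 * (2 * Real.log n) := by
        gcongr; linarith
      linarith
    refine h1.trans ?_
    rw [div_le_div_iff₀ (by positivity) (by positivity)]
    have b1 : Real.log (Real.log n) ^ 2 ≤ Real.log n ^ 4 :=
      (pow_le_pow_left₀ hLL.le hLL2 2).trans (pow_le_pow_right₀ hL.le (by norm_num))
    calc _ = 17 * (n:ℝ) ^ 2 * (k:ℝ) ^ 2 * Real.log n * Real.log (Real.log n) ^ 2 := by ring
      _ ≤ 17 * (n:ℝ) ^ 2 * (k:ℝ) ^ 2 * Real.log n * Real.log n ^ 4 := by gcongr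
      _ = _ := by ring
  · have hS' : (k:ℝ) ≤ S.card := by exact_mod_cast hS
    obtain ⟨j, s, hs, u, hu, e⟩ := exists_rep m x _ hx (by positivity) S
      (by exact_mod_cast hk0.trans_le hS') (by
        rw [ZMod.card]
        refine lt_of_lt_of_le ?_ (mul_le_mul_of_nonneg_left hS' (by positivity))
        rw [div_lt_iff₀ (by positivity)] at hm1
        have e : 2 * (Real.log (4 * n) / ((k:ℝ) / (2 * n)) + m * ((k:ℝ) / (2 * n)) / 2) * n =
            (8 * (n:ℝ) ^ 2 * Real.log (4 * n) + m * (k:ℝ) ^ 2) / (2 * k) := by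
          field_simp; ring
        rw [e, div_lt_iff₀ (by positivity)]
        linarith) v
    exact ⟨x j, Finset.mem_image_of_mem _ (Finset.mem_univ _), s, hs, u, hu, e⟩
end

section
/- Let n ≥ 2 and let L be a positive integer with L < 0.5·n^{1/2}. If (k₁, ℓ₁) and (k₂, ℓ₂) are two pairs with 1 ≤ k₁, k₂ ≤ L and ℓ₁, ℓ₂ primes in (L, 2L] coprime to n, and k₁·ℓ₁^{-1} ≡ k₂·ℓ₂^{-1} (mod n) (inverses taken modulo n), then (k₁, ℓ₁) = (k₂, ℓ₂). In other words, the map (k, ℓ) ↦ k·ℓ^{-1} mod n is injective on [1, L] × 𝓛. -/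
/-- For `n ≥ 2` and a positive integer `L < 0.5·n^{1/2}`, the map
`(k, ℓ) ↦ k·ℓ⁻¹ mod n` is injective on `[1, L] × 𝓛`, where `𝓛` is the set of primes
in `(L, 2L]` coprime to `n`. -/
theorem klinv_injective (n L : ℕ) (hn : 2 ≤ n) (hL : 0 < L)
    (hL2 : (L : ℝ) < 0.5 * Real.sqrt n)
    (k₁ k₂ ℓ₁ ℓ₂ : ℕ)
    (hk₁ : 1 ≤ k₁) (hk₁' : k₁ ≤ L) (hk₂ : 1 ≤ k₂) (hk₂' : k₂ ≤ L)
    (hℓ₁p : Nat.Prime ℓ₁) (hℓ₁ : L < ℓ₁) (hℓ₁' : ℓ₁ ≤ 2 * L) (hℓ₁n : Nat.Coprime ℓ₁ n)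
    (hℓ₂p : Nat.Prime ℓ₂) (hℓ₂ : L < ℓ₂) (hℓ₂' : ℓ₂ ≤ 2 * L) (hℓ₂n : Nat.Coprime ℓ₂ n)
    (heq : (k₁ : ZMod n) * (ℓ₁ : ZMod n)⁻¹ = (k₂ : ZMod n) * (ℓ₂ : ZMod n)⁻¹) :
    k₁ = k₂ ∧ ℓ₁ = ℓ₂ := by
  have h4 : 4 * (L * L) < n := by
    have h0 : (0 : ℝ) ≤ n := Nat.cast_nonneg n
    have hs := Real.mul_self_sqrt h0
    have hs0 := Real.sqrt_nonneg (n : ℝ)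
    have hLr : (0 : ℝ) < L := by exact_mod_cast hL
    have h2 : 2 * (L : ℝ) < Real.sqrt n := by norm_num at hL2; linarith
    have h3 : 4 * ((L : ℝ) * L) < n := by nlinarith
    exact_mod_cast h3
  have e1 := ZMod.coe_mul_inv_eq_one ℓ₁ hℓ₁n
  have e2 := ZMod.coe_mul_inv_eq_one ℓ₂ hℓ₂n
  have hz : ((k₁ * ℓ₂ : ℕ) : ZMod n) = ((k₂ * ℓ₁ : ℕ) : ZMod n) := by
    push_cast
    linear_combination (ℓ₁ * ℓ₂ : ZMod n) * heq - (k₁ * ℓ₂ : ZMod n) * e1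
      + (k₂ * ℓ₁ : ZMod n) * e2
  have b1 : k₁ * ℓ₂ < n := by
    have := Nat.mul_le_mul hk₁' hℓ₂'
    nlinarith
  have b2 : k₂ * ℓ₁ < n := by
    have := Nat.mul_le_mul hk₂' hℓ₁'
    nlinarith
  have hN : k₁ * ℓ₂ = k₂ * ℓ₁ := by
    have h := (ZMod.natCast_eq_natCast_iff' _ _ n).1 hz
    rwa [Nat.mod_eq_of_lt b1, Nat.mod_eq_of_lt b2] at h
  have hl : ℓ₁ = ℓ₂ := by
    have hd : ℓ₁ ∣ k₁ * ℓ₂ := hN ▸ Dvd.intro_left k₂ rfl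
    rcases hℓ₁p.dvd_mul.1 hd with h | h
    · have := Nat.le_of_dvd hk₁ h
      omega
    · exact (Nat.prime_dvd_prime_iff_eq hℓ₁p hℓ₂p).1 h
  subst hl
  exact ⟨Nat.eq_of_mul_eq_mul_right hℓ₁p.pos hN, rfl⟩
end

section
/- Let n ≥ 2 and let L be a positive integer with L < 0.5·n^{1/2}. Then the set W = {k·ℓ^{-1} mod n : 1 ≤ k ≤ L, ℓ ∈ 𝓛} ⊆ Z_n has cardinality exactly #W = L · #𝓛. -/
/-- The set `𝓛 = 𝓛(n, L)` of primes `ℓ` with `L < ℓ ≤ 2L` and `gcd(ℓ, n) = 1`. -/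
def calL (n L : ℕ) : Finset ℕ :=
  (Finset.Ioc L (2 * L)).filter fun ℓ => Nat.Prime ℓ ∧ Nat.Coprime ℓ n

/-- The set `W = W(n, L) = {k·ℓ⁻¹ mod n : 1 ≤ k ≤ L, ℓ ∈ 𝓛} ⊆ Z_n`. -/
def calW (n L : ℕ) : Finset (ZMod n) :=
  ((Finset.Icc 1 L) ×ˢ calL n L).image fun p => (p.1 : ZMod n) * (p.2 : ZMod n)⁻¹

/-- For `n ≥ 2` and a positive integer `L < 0.5·n^{1/2}`,
the set `W` has cardinality exactly `#W = L · #𝓛`. -/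
theorem calW_card (n L : ℕ) (hn : 2 ≤ n) (hL : 0 < L)
    (hL2 : (L : ℝ) < 0.5 * Real.sqrt n) :
    (calW n L).card = L * (calL n L).card := by
  have h4 : 4 * (L * L) < n := by
    have hs : Real.sqrt n * Real.sqrt n = n := Real.mul_self_sqrt (Nat.cast_nonneg n)
    have hL0 : (0 : ℝ) < L := by exact_mod_cast hL
    have : (4 * (L * L) : ℝ) < n := by
      norm_num at hL2
      nlinarith
    exact_mod_cast this
  unfold calW
  rw [Finset.card_image_of_injOn, Finset.card_product, Nat.card_Icc, Nat.add_sub_cancel]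
  rintro ⟨k, l⟩ h ⟨k', l'⟩ h' heq
  simp only [calL, Finset.coe_product, Set.mem_prod, Finset.mem_coe, Finset.mem_Icc,
    Finset.mem_filter, Finset.mem_Ioc] at h h' heq
  obtain ⟨⟨hk1, hkL⟩, ⟨hl1, hl2⟩, hp, hc⟩ := h
  obtain ⟨⟨hk1', hkL'⟩, ⟨hl1', hl2'⟩, hp', hc'⟩ := h'
  have e := ZMod.coe_mul_inv_eq_one l hc
  have e' := ZMod.coe_mul_inv_eq_one l' hc'
  have hz : ((k * l' : ℕ) : ZMod n) = ((k' * l : ℕ) : ZMod n) := by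
    push_cast
    linear_combination (l : ZMod n) * l' * heq - (k : ZMod n) * l' * e + (k' : ZMod n) * l * e'
  have hm := (ZMod.natCast_eq_natCast_iff' _ _ _).1 hz
  rw [Nat.mod_eq_of_lt (by nlinarith), Nat.mod_eq_of_lt (by nlinarith)] at hm
  have hd : l ∣ k * l' := hm ▸ dvd_mul_left l k'
  have hll : l = l' := by
    rcases hp.dvd_mul.1 hd with h | h
    · have := Nat.le_of_dvd hk1 h
      omega
    · exact (Nat.prime_dvd_prime_iff_eq hp hp').1 h
  subst hll
  have := Nat.eq_of_mul_eq_mul_right hp.pos hm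
  rw [this]
end

section
/- There exist constants C > 0 and n₀ such that for every integer n ≥ n₀, every positive integer L ≤ n, every integer a with a ≢ 0 (mod n), and every real Z with 1 ≤ Z ≤ n, the number of primes ℓ with L < ℓ ≤ 2L, gcd(ℓ, n) = 1, and |ρ_n(a/ℓ)| < Z is at most C · (LZ/n + 1) · log n / log log n. -/
/-- `ρ_n(x)`: the unique integer `w` with `w ≡ x (mod n)` and `-n/2 < w ≤ n/2`. -/
def rho (n : ℕ) (x : ZMod n) : ℤ :=
  if 2 * x.val ≤ n then (x.val : ℤ) else (x.val : ℤ) - n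

lemma fact_le_prod (s : Finset ℕ) (hs : ∀ x ∈ s, 0 < x) : s.card.factorial ≤ ∏ x ∈ s, x := by
  induction s using Finset.induction_on_max with
  | empty => simp
  | insert a s ha ih =>
    have hna : a ∉ s := fun h => lt_irrefl _ (ha a h)
    rw [Finset.card_insert_of_notMem hna, Finset.prod_insert hna, Nat.factorial_succ]
    have h1 := ih (fun x hx => hs x (Finset.mem_insert_of_mem hx))
    have h2 : s.card + 1 ≤ a := by
      have : s ⊆ Finset.Ioo 0 a := fun x hx =>
        Finset.mem_Ioo.2 ⟨hs x (Finset.mem_insert_of_mem hx), ha x hx⟩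
      have h3 := Finset.card_le_card this
      have := hs a (Finset.mem_insert_self _ _)
      rw [Nat.card_Ioo] at h3
      omega
    exact Nat.mul_le_mul h2 h1

lemma k_bound (n k : ℕ) (hn : 16 ≤ n) (h : k.factorial ≤ n ^ 3) :
    (k : ℝ) ≤ 8 * Real.log n / Real.log (Real.log n) := by
  have hn' : (16 : ℝ) ≤ n := by exact_mod_cast hn
  set x := Real.log n with hx
  have hx1 : 2 < x := by
    rw [hx, Real.lt_log_iff_exp_lt (by linarith)]
    have h1 := Real.exp_one_lt_d9
    have h2 : Real.exp 2 = Real.exp 1 * Real.exp 1 := by rw [← Real.exp_add]; norm_num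
    have := Real.exp_pos 1
    nlinarith
  set y := Real.log x with hy
  have hy0 : 0 < y := Real.log_pos (by linarith)
  by_contra hc
  push Not at hc
  rw [div_lt_iff₀ hy0] at hc
  have hs : 0 < Real.sqrt x := Real.sqrt_pos.2 (by linarith)
  have hss : Real.sqrt x * Real.sqrt x = x := Real.mul_self_sqrt (by linarith)
  have hlogs : Real.log (Real.sqrt x) = y / 2 := Real.log_sqrt (by linarith)
  have hyx : y ≤ 2 * Real.sqrt x := by
    have := Real.log_le_self hs.le
    linarith
  have hk0 : (0 : ℝ) < k := by
    by_contra h0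
    push Not at h0
    nlinarith
  have hks : Real.exp 1 * Real.sqrt x ≤ k := by
    have h1 := Real.exp_one_lt_d9
    have h2 : 4 * Real.sqrt x ≤ k := by
      by_contra h0
      push Not at h0
      have : (k : ℝ) * y < 4 * Real.sqrt x * (2 * Real.sqrt x) := by
        nlinarith
      nlinarith
    nlinarith
  have hlk : 1 + y / 2 ≤ Real.log k := by
    have := Real.log_le_log (by positivity) hks
    rwa [Real.log_mul (Real.exp_pos 1).ne' hs.ne', Real.log_exp, hlogs] at this
  have h1 := Real.pow_div_factorial_le_exp (k : ℝ) hk0.le k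
  have hf : (0 : ℝ) < k.factorial := by exact_mod_cast Nat.factorial_pos k
  rw [div_le_iff₀ hf] at h1
  have h2 : (k.factorial : ℝ) ≤ (n : ℝ) ^ 3 := by exact_mod_cast h
  have h3 : (k : ℝ) ^ k ≤ Real.exp k * (n : ℝ) ^ 3 :=
    h1.trans (mul_le_mul_of_nonneg_left h2 (Real.exp_pos _).le)
  have h4 := Real.log_le_log (by positivity) h3
  rw [Real.log_mul (Real.exp_pos _).ne' (by positivity), Real.log_exp, Real.log_pow, Real.log_pow] at h4
  push_cast at h4
  nlinarith

lemma omega_bound (n : ℕ) (hn : 16 ≤ n) (m : ℤ) (hm : m ≠ 0) (hmn : m.natAbs ≤ n ^ 3)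
    (s : Finset ℕ) (hs : ∀ p ∈ s, p.Prime ∧ (p : ℤ) ∣ m) :
    (s.card : ℝ) ≤ 8 * Real.log n / Real.log (Real.log n) := by
  apply k_bound n _ hn
  refine le_trans (fact_le_prod s fun x hx => (hs x hx).1.pos) (le_trans ?_ hmn)
  apply Nat.le_of_dvd (Int.natAbs_pos.2 hm)
  exact Finset.prod_primes_dvd _ (fun p hp => (hs p hp).1.prime)
    (fun p hp => Int.natCast_dvd.1 (hs p hp).2)

lemma rho_cast (n : ℕ) [NeZero n] (x : ZMod n) : ((rho n x : ℤ) : ZMod n) = x := by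
  unfold rho
  split_ifs <;> simp

open scoped Classical in
theorem count_small_rho_nat :
    ∃ C : ℝ, C > 0 ∧ ∃ n₀ : ℕ, ∀ n : ℕ, n₀ ≤ n →
      ∀ L : ℕ, 0 < L → L ≤ n → ∀ a : ℤ, ¬ ((n : ℤ) ∣ a) → ∀ Z : ℝ, 1 ≤ Z → Z ≤ n →
        ((((calL n L).filter fun ℓ : ℕ =>
            (|rho n ((a : ZMod n) * (ℓ : ZMod n)⁻¹)| : ℝ) < Z).card : ℝ)
          ≤ C * ((L : ℝ) * Z / n + 1) * Real.log n / Real.log (Real.log n)) := by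
  refine ⟨32, by norm_num, 16, ?_⟩
  intro n hn L hL hLn a ha Z hZ1 hZn
  have : NeZero n := ⟨by omega⟩
  have hn' : (16 : ℝ) ≤ n := by exact_mod_cast hn
  have hn0 : (0 : ℝ) < n := by linarith
  have hLr : (0 : ℝ) < L := by exact_mod_cast hL
  have hLnr : (L : ℝ) ≤ n := by exact_mod_cast hLn
  set S := (calL n L).filter fun ℓ : ℕ =>
            (|rho n ((a : ZMod n) * (ℓ : ZMod n)⁻¹)| : ℝ) < Z with hS
  let g : ℕ → ℤ := fun ℓ => (ℓ : ℤ) * rho n ((a : ZMod n) * (ℓ : ZMod n)⁻¹)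
  have key : ∀ ℓ ∈ S, ℓ.Prime ∧ g ℓ % n = a % n ∧ |(g ℓ : ℝ)| ≤ 2 * (L * Z) := by
    intro ℓ hℓ
    simp only [hS, calL, Finset.mem_filter, Finset.mem_Ioc] at hℓ
    obtain ⟨⟨⟨_, h2⟩, hp, hco⟩, hz⟩ := hℓ
    refine ⟨hp, ?_, ?_⟩
    · have : ((g ℓ : ℤ) : ZMod n) = ((a : ℤ) : ZMod n) := by
        simp only [g]
        push_cast
        rw [rho_cast, mul_left_comm, ZMod.coe_mul_inv_eq_one ℓ hco, mul_one]
      exact (ZMod.intCast_eq_intCast_iff' _ _ _).1 this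
    · simp only [g]
      push_cast
      rw [abs_mul, Nat.abs_cast]
      have h2' : (ℓ : ℝ) ≤ 2 * L := by exact_mod_cast h2
      calc _ ≤ (2 * L : ℝ) * Z := mul_le_mul h2' hz.le (abs_nonneg _) (by positivity)
        _ = _ := by ring
  set B : ℝ := 2 * (L * Z) with hB
  have hBn : B ≤ (n : ℝ) ^ 3 := by
    have : (L : ℝ) * Z ≤ n * n := mul_le_mul hLnr hZn (by linarith) hn0.le
    nlinarith [mul_pos hn0 hn0]
  set T := Finset.Icc ⌊-(B / n)⌋ ⌊B / n⌋ with hT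
  have hmaps : ∀ ℓ ∈ S, g ℓ / n ∈ T := by
    intro ℓ hℓ
    obtain ⟨_, _, h3⟩ := key ℓ hℓ
    have e : g ℓ / (n : ℤ) = ⌊(g ℓ : ℝ) / n⌋ := by
      rw [Int.floor_div_natCast, Int.floor_intCast]
    rw [hT, Finset.mem_Icc, e]
    obtain ⟨h4, h5⟩ := abs_le.1 h3
    constructor
    · apply Int.floor_mono
      rw [← neg_div]
      gcongr
    · apply Int.floor_mono
      gcongr
  set K := 8 * Real.log n / Real.log (Real.log n) with hK
  have hfib : ∀ k ∈ T, ((S.filter fun ℓ => g ℓ / n = k).card : ℝ) ≤ K := by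
    intro k _
    rcases (S.filter fun ℓ => g ℓ / n = k).eq_empty_or_nonempty with h0 | ⟨q, hq⟩
    · rw [h0]
      have := k_bound n 0 hn (by simpa using Nat.one_le_pow _ _ (by omega))
      simpa using this
    · rw [Finset.mem_filter] at hq
      obtain ⟨_, hq2, hq3⟩ := key q hq.1
      apply omega_bound n hn (g q)
      · intro h0
        rw [h0] at hq2
        apply ha
        apply Int.dvd_of_emod_eq_zero
        rw [← hq2]; simp
      · have : |(g q : ℝ)| ≤ (n : ℝ) ^ 3 := hq3.trans hBn
        rw [← Int.cast_abs, Int.abs_eq_natAbs] at this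
        exact_mod_cast this
      · intro p hp
        rw [Finset.mem_filter] at hp
        obtain ⟨hp1, hp2, _⟩ := key p hp.1
        refine ⟨hp1, ?_⟩
        have : g q = g p := by
          rw [← Int.mul_ediv_add_emod (g q) n, ← Int.mul_ediv_add_emod (g p) n, hq.2, hp.2, hq2, hp2]
        rw [this]
        exact Dvd.intro _ rfl
  have hK0 : 0 ≤ K := by
    have := k_bound n 0 hn (by simpa using Nat.one_le_pow _ _ (by omega))
    simpa using this
  have hTc : (T.card : ℝ) ≤ 4 * ((L : ℝ) * Z / n + 1) := by
    have hb : 0 ≤ B / n := by positivity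
    have hle : ⌊-(B / n)⌋ ≤ ⌊B / n⌋ := Int.floor_mono (by linarith)
    have e : (T.card : ℤ) = ⌊B / n⌋ + 1 - ⌊-(B / n)⌋ := by
      rw [hT]
      exact Int.card_Icc_of_le _ _ (by omega)
    have e' : (T.card : ℝ) = ⌊B / n⌋ + 1 - ⌊-(B / n)⌋ := by exact_mod_cast e
    have f1 := Int.floor_le (B / n)
    have f2 := Int.lt_floor_add_one (-(B / n))
    have f3 : B / n = 2 * (L * Z / n) := by rw [hB]; ring
    rw [e']
    linarith
  have hsum : (S.card : ℝ) = ∑ k ∈ T, ((S.filter fun ℓ => g ℓ / n = k).card : ℝ) := by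
    exact_mod_cast Finset.card_eq_sum_card_fiberwise hmaps
  calc (S.card : ℝ) ≤ ∑ k ∈ T, K := hsum ▸ Finset.sum_le_sum hfib
    _ = T.card * K := by simp
    _ ≤ 4 * ((L : ℝ) * Z / n + 1) * K := mul_le_mul_of_nonneg_right hTc hK0
    _ = _ := by rw [hK]; ring

open scoped Classical in
/-- There exist `C > 0` and `n₀` such that for every `n ≥ n₀`, every positive
integer `L ≤ n`, every integer `a ≢ 0 (mod n)`, and every real `1 ≤ Z ≤ n`, the number of
primes `ℓ ∈ 𝓛` with `|ρ_n(a/ℓ)| < Z` is at most `C (LZ/n + 1) log n / log log n`. -/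
theorem count_small_rho :
    ∃ C : ℝ, C > 0 ∧ ∃ n₀ : ℕ, ∀ n : ℕ, n₀ ≤ n →
      ∀ L : ℕ, 0 < L → L ≤ n → ∀ a : ℤ, ¬ ((n : ℤ) ∣ a) → ∀ Z : ℝ, 1 ≤ Z → Z ≤ n →
        ((((calL n L).filter fun ℓ =>
            (|rho n ((a : ZMod n) * (ℓ : ZMod n)⁻¹)| : ℝ) < Z).card : ℝ)
          ≤ C * ((L : ℝ) * Z / n + 1) * Real.log n / Real.log (Real.log n)) := by
  obtain ⟨C, hC, n₀, h⟩ := count_small_rho_nat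
  refine ⟨C, hC, n₀, ?_⟩
  intro n hn L hL hLn a ha Z hZ1 hZn
  refine le_trans ?_ (h n hn L hL hLn a ha Z hZ1 hZn)
  -- In the frozen statement `ℓ` ranges over the residues mod `n` of the primes in `calL n L`.
  -- Every such residue comes from a prime in the natural-number version of the set.
  rw [Nat.cast_le]
  refine le_trans (Finset.card_le_card ?_)
    (Finset.card_image_le (f := fun ℓ : ℕ => (ℓ : ZMod n)))
  intro x hx
  simp only [Finset.mem_filter, Finset.bind_def, Finset.mem_sup, Finset.pure_def,
    Finset.mem_singleton] at hx
  obtain ⟨⟨ℓ, hℓ, rfl⟩, hz⟩ := hx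
  exact Finset.mem_image.2 ⟨ℓ, Finset.mem_filter.2 ⟨hℓ, hz⟩, rfl⟩
end

section
/- There exist constants C > 0 and n₀ such that the following holds. Let n ≥ n₀, let L be a positive integer with L < 0.5·n^{1/2}, let W = W(n, L), let S ⊆ Z_n be any set, and for u ∈ Z_n let N(u) denote the number of triples (s, t, w) ∈ S × S × W with s + t + w = u in Z_n. Then |N(u) − (#S)^{2} · #W / n| ≤ C · L · #S · (log n)^{2} / log log n. -/
open Finset in
lemma aux_count {n : ℕ} [NeZero n] (S W : Finset (ZMod n)) (u : ZMod n) :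
    (n : ℂ) * (((S ×ˢ S ×ˢ W).filter fun p => p.1 + p.2.1 + p.2.2 = u).card : ℂ)
      = ∑ a : ZMod n, (∑ s ∈ S, ZMod.stdAddChar (a * s)) ^ 2 *
          (∑ w ∈ W, ZMod.stdAddChar (a * w)) * ZMod.stdAddChar (-(a * u)) := by
  have h1 : ∀ a : ZMod n, (∑ s ∈ S, (ZMod.stdAddChar (a * s) : ℂ)) ^ 2 *
          (∑ w ∈ W, ZMod.stdAddChar (a * w)) * ZMod.stdAddChar (-(a * u))
        = ∑ p ∈ S ×ˢ S ×ˢ W, ZMod.stdAddChar (a * (p.1 + p.2.1 + p.2.2 - u)) := by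
    intro a
    rw [Finset.sum_product]
    simp_rw [Finset.sum_product]
    have : ∀ s t w : ZMod n, (ZMod.stdAddChar (a * (s + t + w - u)) : ℂ) =
        ZMod.stdAddChar (a * s) * (ZMod.stdAddChar (a * t) *
          (ZMod.stdAddChar (a * w) * ZMod.stdAddChar (-(a * u)))) := by
      intro s t w
      rw [← AddChar.map_add_eq_mul, ← AddChar.map_add_eq_mul, ← AddChar.map_add_eq_mul]
      congr 1; ring
    simp_rw [this, ← Finset.mul_sum, ← Finset.sum_mul]
    ring
  simp_rw [h1]
  rw [Finset.sum_comm]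
  have h2 : ∀ b : ZMod n, ∑ a : ZMod n, (ZMod.stdAddChar (a * b) : ℂ)
      = if b = 0 then (n : ℂ) else 0 := by
    intro b
    rw [AddChar.sum_mulShift b (ZMod.isPrimitive_stdAddChar n)]
    split_ifs <;> simp
  simp_rw [h2, sub_eq_zero]
  rw [Finset.card_filter]
  push_cast
  rw [Finset.mul_sum]
  apply Finset.sum_congr rfl
  intro p _
  split_ifs <;> simp

open Finset in
lemma aux_parseval {n : ℕ} [NeZero n] (S : Finset (ZMod n)) :
    ∑ a : ZMod n, ‖∑ s ∈ S, (ZMod.stdAddChar (a * s) : ℂ)‖ ^ 2 = (n : ℝ) * S.card := by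
  have h1 : ∀ a : ZMod n, ((‖∑ s ∈ S, (ZMod.stdAddChar (a * s) : ℂ)‖ ^ 2 : ℝ) : ℂ)
      = ∑ s ∈ S, ∑ t ∈ S, ZMod.stdAddChar (a * (s - t)) := by
    intro a
    rw [Complex.ofReal_pow, ← Complex.mul_conj', map_sum, Finset.sum_mul_sum]
    apply Finset.sum_congr rfl; intro s _
    apply Finset.sum_congr rfl; intro t _
    rw [← AddChar.map_neg_eq_conj, ← AddChar.map_add_eq_mul]
    congr 1; ring
  have h2 : ∀ b : ZMod n, ∑ a : ZMod n, (ZMod.stdAddChar (a * b) : ℂ)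
      = if b = 0 then (n : ℂ) else 0 := by
    intro b
    rw [AddChar.sum_mulShift b (ZMod.isPrimitive_stdAddChar n)]
    split_ifs <;> simp
  have : ((∑ a : ZMod n, ‖∑ s ∈ S, (ZMod.stdAddChar (a * s) : ℂ)‖ ^ 2 : ℝ) : ℂ)
      = ((n : ℝ) * S.card : ℝ) := by
    rw [Complex.ofReal_sum]
    simp_rw [h1]
    rw [Finset.sum_comm]
    have : ∀ s ∈ S, ∑ a : ZMod n, ∑ t ∈ S, (ZMod.stdAddChar (a * (s - t)) : ℂ) = n := by
      intro s hs
      rw [Finset.sum_comm]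
      simp_rw [h2, sub_eq_zero]
      simp [hs]
    rw [Finset.sum_congr rfl this]
    simp [mul_comm]
  exact_mod_cast this

open Finset in
lemma aux_main {n : ℕ} [NeZero n] (S W : Finset (ZMod n)) (u : ZMod n) (M : ℝ)
    (hM : ∀ a : ZMod n, a ≠ 0 → ‖∑ w ∈ W, (ZMod.stdAddChar (a * w) : ℂ)‖ ≤ M) (hM0 : 0 ≤ M) :
    |((((S ×ˢ S ×ˢ W).filter fun p => p.1 + p.2.1 + p.2.2 = u).card : ℝ)
              - (S.card : ℝ) ^ 2 * (W.card : ℝ) / n)| ≤ M * S.card := by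
  have hn : (0 : ℝ) < n := by exact_mod_cast Nat.pos_of_ne_zero (NeZero.ne n)
  set N : ℕ := ((S ×ˢ S ×ˢ W).filter fun p => p.1 + p.2.1 + p.2.2 = u).card with hN
  have h := aux_count S W u
  rw [← hN, ← Finset.add_sum_erase _ _ (Finset.mem_univ (0 : ZMod n))] at h
  simp only [zero_mul, neg_zero, AddChar.map_zero_eq_one, Finset.sum_const, nsmul_eq_mul,
    mul_one] at h
  have h' : ‖((n : ℝ) * N - (S.card : ℝ) ^ 2 * W.card : ℝ)‖ ≤ M * (n * S.card) := by
    rw [← Complex.norm_real]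
    push_cast
    rw [h, add_sub_cancel_left]
    refine (norm_sum_le _ _).trans ?_
    rw [← aux_parseval, Finset.mul_sum]
    refine (Finset.sum_le_sum (g := fun a : ZMod n =>
      M * ‖∑ s ∈ S, (ZMod.stdAddChar (a * s) : ℂ)‖ ^ 2) ?_).trans ?_
    · intro a ha
      rw [norm_mul, norm_mul, norm_pow, AddChar.norm_apply, mul_one, mul_comm]
      exact mul_le_mul_of_nonneg_right (hM a (Finset.ne_of_mem_erase ha)) (by positivity)
    · exact Finset.sum_le_sum_of_subset_of_nonneg (Finset.erase_subset _ _)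
        (fun _ _ _ => by positivity)
  rw [Real.norm_eq_abs] at h'
  have e : (N : ℝ) - (S.card : ℝ) ^ 2 * W.card / n
      = ((n : ℝ) * N - (S.card : ℝ) ^ 2 * W.card) / n := by field_simp
  rw [e, abs_div, abs_of_pos hn, div_le_iff₀ hn]
  linarith

lemma aux_geom {n : ℕ} [NeZero n] (b : ZMod n) (hb : b ≠ 0) (L : ℕ) :
    ‖∑ k ∈ Finset.Icc 1 L, (ZMod.stdAddChar (b * (k : ZMod n)) : ℂ)‖
      ≤ n / |(b.valMinAbs : ℝ)| := by
  have hn : (0 : ℝ) < n := by exact_mod_cast Nat.pos_of_ne_zero (NeZero.ne n)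
  set v : ℤ := b.valMinAbs with hv
  have hv0 : v ≠ 0 := by rwa [hv, Ne, ZMod.valMinAbs_eq_zero]
  have hvpos : 0 < |(v : ℝ)| := by simpa using hv0
  have hvn : |(v : ℝ)| ≤ n / 2 := by
    have := ZMod.natAbs_valMinAbs_le b
    rw [← hv] at this
    have h2 : v.natAbs * 2 ≤ n := by omega
    have h3 : (v.natAbs : ℝ) * 2 ≤ n := by exact_mod_cast h2
    rw [Nat.cast_natAbs] at h3
    push_cast at h3
    linarith
  set q : ℂ := ZMod.stdAddChar b with hq
  have hqe : q = Complex.exp (Complex.I * ((2 * Real.pi * v / n : ℝ) : ℂ)) := by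
    rw [hq, ← ZMod.coe_valMinAbs b, ← hv, ZMod.stdAddChar_coe]
    congr 1; push_cast; ring
  have hq1 : 4 * |(v : ℝ)| / n ≤ ‖q - 1‖ := by
    rw [hqe, Complex.norm_exp_I_mul_ofReal_sub_one, norm_mul, Real.norm_eq_abs, Real.norm_eq_abs]
    have e : 2 * Real.pi * v / n / 2 = Real.pi * v / n := by ring
    rw [e]
    have hab : |Real.pi * v / n| = Real.pi * |(v : ℝ)| / n := by
      rw [abs_div, abs_mul, abs_of_pos Real.pi_pos, abs_of_pos hn]
    have h1 := Real.mul_abs_le_abs_sin (x := Real.pi * v / n) (by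
      rw [hab, div_le_iff₀ hn]
      nlinarith [Real.pi_pos])
    rw [hab] at h1
    have e2 : 2 / Real.pi * (Real.pi * |(v : ℝ)| / n) = 2 * |(v : ℝ)| / n := by
      field_simp
    rw [e2] at h1
    rw [abs_of_pos (by norm_num : (0 : ℝ) < 2)]
    calc 4 * |(v : ℝ)| / n = 2 * (2 * |(v : ℝ)| / n) := by ring
      _ ≤ _ := by linarith
  have hpos : 0 < ‖q - 1‖ := lt_of_lt_of_le (by positivity) hq1
  have hqne : q ≠ 1 := by
    intro h; rw [h] at hpos; simp at hpos
  have hsum : ∑ k ∈ Finset.Icc 1 L, (ZMod.stdAddChar (b * (k : ZMod n)) : ℂ)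
      = q * ((q ^ L - 1) / (q - 1)) := by
    rw [← geom_sum_eq hqne, Finset.mul_sum]
    rw [← Finset.Ico_add_one_right_eq_Icc, Finset.sum_Ico_eq_sum_range]
    simp only [Nat.add_sub_cancel]
    apply Finset.sum_congr rfl
    intro k _
    rw [← pow_succ', hq, ← AddChar.map_nsmul_eq_pow]
    congr 1
    rw [nsmul_eq_mul]; push_cast; ring
  have hqn : ‖q‖ = 1 := AddChar.norm_apply _ _
  rw [hsum, norm_mul, norm_div, hqn, one_mul, div_le_div_iff₀ hpos hvpos]
  have h2 : ‖q ^ L - 1‖ ≤ 2 := by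
    refine (norm_sub_le _ _).trans ?_
    rw [norm_pow, hqn]; norm_num
  rw [div_le_iff₀ hn] at hq1
  nlinarith [abs_nonneg (v : ℝ)]

lemma aux_omega {n L : ℕ} (hn : 16 ≤ n) (hLn : L ≤ n) (T : Finset ℕ) (hT : T ⊆ calL n L) (z : ℕ)
    (hz : z ≠ 0) (hzn : z ≤ n ^ 2) (hd : ∀ ℓ ∈ T, ℓ ∣ z) :
    (T.card : ℝ) ≤ 4 * Real.log n / Real.log (Real.log n) := by
  have hn0 : (0 : ℝ) < n := by positivity
  have hl1 : 1 < Real.log n := by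
    rw [Real.lt_log_iff_exp_lt hn0]
    have : (16 : ℝ) ≤ n := by exact_mod_cast hn
    linarith [Real.exp_one_lt_d9]
  set x := Real.log n with hx
  have hll : 0 < Real.log x := Real.log_pos hl1
  have hsx : Real.log x = 2 * Real.log (Real.sqrt x) := by
    rw [Real.log_sqrt (by linarith)]; ring
  have hs1 : 1 < Real.sqrt x := by rw [Real.lt_sqrt (by norm_num)]; simpa using hl1
  have hsq : Real.sqrt x * Real.sqrt x = x := Real.mul_self_sqrt (by linarith)
  rw [le_div_iff₀ hll]
  rcases lt_or_ge (L : ℝ) (Real.sqrt x) with h | h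
  · have hc : T.card ≤ L := by
      refine (Finset.card_le_card hT).trans ((Finset.card_filter_le _ _).trans ?_)
      simp; omega
    have hc' : (T.card : ℝ) ≤ Real.sqrt x := by
      have : (T.card : ℝ) ≤ L := by exact_mod_cast hc
      linarith
    have h3 : Real.log x ≤ 2 * Real.sqrt x := by
      have := Real.log_le_sub_one_of_pos (x := Real.sqrt x) (by linarith)
      linarith
    calc (T.card : ℝ) * Real.log x ≤ Real.sqrt x * (2 * Real.sqrt x) := by gcongr
      _ = 2 * x := by linear_combination 2 * hsq
      _ ≤ 4 * x := by linarith
  · have hp : ∏ p ∈ T, p ∣ z := by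
      apply Finset.prod_primes_dvd
      · intro a ha
        have := hT ha
        simp only [calL, Finset.mem_filter] at this
        exact this.2.1.prime
      · exact hd
    have h1 : L ^ T.card ≤ n ^ 2 := by
      refine le_trans ?_ ((Nat.le_of_dvd (Nat.pos_of_ne_zero hz) hp).trans hzn)
      apply Finset.pow_card_le_prod
      intro a ha
      have := hT ha
      simp only [calL, Finset.mem_filter, Finset.mem_Ioc] at this
      omega
    have hL0 : (0 : ℝ) < L := by linarith
    have h2 : (L : ℝ) ^ T.card ≤ (n : ℝ) ^ 2 := by exact_mod_cast h1
    have h3 := Real.log_le_log (by positivity) h2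
    rw [Real.log_pow, Real.log_pow, ← hx] at h3
    have h4 : Real.log (Real.sqrt x) ≤ Real.log L := Real.log_le_log (by linarith) h
    have : (T.card : ℝ) * Real.log (Real.sqrt x) ≤ T.card * Real.log L := by gcongr
    rw [hsx]; push_cast at h3; linarith

lemma aux_inj {n L : ℕ} [NeZero n] (hL : 2 * L * L < n) :
    Set.InjOn (fun p : ℕ × ℕ => (p.1 : ZMod n) * (p.2 : ZMod n)⁻¹)
      ((Finset.Icc 1 L ×ˢ calL n L : Finset (ℕ × ℕ)) : Set (ℕ × ℕ)) := by
  rintro ⟨k, l⟩ h1 ⟨k', l'⟩ h2 h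
  simp only [calL, Finset.coe_product, Set.mem_prod, Finset.mem_coe, Finset.mem_Icc,
    Finset.mem_filter, Finset.mem_Ioc] at h1 h2
  obtain ⟨⟨hk1, hk2⟩, ⟨hl1, hl2⟩, hlp, hlc⟩ := h1
  obtain ⟨⟨hk1', hk2'⟩, ⟨hl1', hl2'⟩, hlp', hlc'⟩ := h2
  simp only at h
  have e1 := ZMod.coe_mul_inv_eq_one l hlc
  have e2 := ZMod.coe_mul_inv_eq_one l' hlc'
  have h3 : ((k * l' : ℕ) : ZMod n) = ((k' * l : ℕ) : ZMod n) := by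
    push_cast
    calc (k : ZMod n) * l' = (k * (l : ZMod n)⁻¹) * l * l' := by
          linear_combination (-(k : ZMod n) * l') * e1
      _ = (k' * (l' : ZMod n)⁻¹) * l * l' := by rw [h]
      _ = k' * l := by linear_combination ((k' : ZMod n) * l) * e2
  rw [ZMod.natCast_eq_natCast_iff] at h3
  have b1 : k * l' < n := by
    calc k * l' ≤ L * (2 * L) := Nat.mul_le_mul hk2 hl2'
      _ = 2 * L * L := by ring
      _ < n := hL
  have b2 : k' * l < n := by
    calc k' * l ≤ L * (2 * L) := Nat.mul_le_mul hk2' hl2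
      _ = 2 * L * L := by ring
      _ < n := hL
  have h4 : k * l' = k' * l := Nat.ModEq.eq_of_lt_of_lt h3 b1 b2
  have hdvd : l' ∣ k' * l := ⟨k, by rw [← h4]; ring⟩
  have hll : l' = l := by
    rcases (Nat.Prime.dvd_mul hlp').1 hdvd with h | h
    · have := Nat.le_of_dvd (by omega) h
      omega
    · exact (Nat.prime_dvd_prime_iff_eq hlp' hlp).1 h
  subst hll
  have : k = k' := Nat.eq_of_mul_eq_mul_right hlp'.pos h4
  rw [this]

lemma aux_fib {n L : ℕ} [NeZero n] (hn : 16 ≤ n) (hLn : L ≤ n) (a : ZMod n) (m : ℕ)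
    (z : ℕ → ℤ) (hz0 : ∀ ℓ ∈ calL n L, z ℓ ≠ 0)
    (hza : ∀ ℓ ∈ calL n L, ((z ℓ : ℤ) : ZMod n) = a)
    (hzb : ∀ ℓ ∈ calL n L, (z ℓ).natAbs ≤ n ^ 2)
    (hzd : ∀ ℓ ∈ calL n L, (ℓ : ℤ) ∣ z ℓ) :
    (((calL n L).filter fun ℓ => (z ℓ).natAbs / n = m).card : ℝ)
      ≤ 2 * (4 * Real.log n / Real.log (Real.log n)) := by
  have hn0 : 0 < n := by omega
  have hn0' : (0 : ℤ) < n := by omega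
  -- any subset on which `z` is constant is small
  have key : ∀ T : Finset ℕ, T ⊆ calL n L → (∀ x ∈ T, ∀ y ∈ T, z x = z y) →
      (T.card : ℝ) ≤ 4 * Real.log n / Real.log (Real.log n) := by
    intro T hT hc
    rcases T.eq_empty_or_nonempty with rfl | ⟨x, hx⟩
    · apply aux_omega hn hLn ∅ hT 1 (by norm_num) (Nat.one_le_pow _ _ hn0) (by simp)
    · apply aux_omega hn hLn T hT (z x).natAbs (by simpa using hz0 x (hT hx)) (hzb x (hT hx))
      intro ℓ hl
      rw [hc x hx ℓ hl]
      exact Int.natCast_dvd.1 (hzd ℓ (hT hl))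
  set F := (calL n L).filter fun ℓ => (z ℓ).natAbs / n = m with hF
  have hcong : ∀ x ∈ calL n L, ∀ y ∈ calL n L, (z x) ≡ (z y) [ZMOD n] := by
    intro x hx y hy
    rw [← ZMod.intCast_eq_intCast_iff, hza x hx, hza y hy]
  have hbd : ∀ x ∈ F, x ∈ calL n L ∧ (m : ℤ) * n ≤ |z x| ∧ |z x| < m * n + n := by
    intro x hx
    rw [hF, Finset.mem_filter] at hx
    refine ⟨hx.1, ?_⟩
    have h1 := Nat.div_add_mod (z x).natAbs n
    have h2 := Nat.mod_lt (z x).natAbs hn0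
    rw [hx.2] at h1
    rw [Int.abs_eq_natAbs, ← h1]
    push_cast
    have h3 : (((z x).natAbs % n : ℕ) : ℤ) < n := by exact_mod_cast h2
    push_cast at h3
    constructor
    · nlinarith [Int.emod_nonneg |z x| hn0'.ne']
    · linarith
  have hclose : ∀ x ∈ calL n L, ∀ y ∈ calL n L, |z x - z y| < n → z x = z y := by
    intro x hx y hy h
    have hd := (hcong y hy x hx).dvd
    have := Int.eq_zero_of_abs_lt_dvd hd h
    linarith
  have hP := key (F.filter fun ℓ => 0 < z ℓ)
    ((Finset.filter_subset _ _).trans (Finset.filter_subset _ _)) (by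
      intro x hx y hy
      rw [Finset.mem_filter] at hx hy
      obtain ⟨h1, h2, h3⟩ := hbd x hx.1
      obtain ⟨h1', h2', h3'⟩ := hbd y hy.1
      rw [abs_of_pos hx.2] at h2 h3
      rw [abs_of_pos hy.2] at h2' h3'
      apply hclose x h1 y h1'
      rw [abs_lt]; constructor <;> linarith)
  have hN := key (F.filter fun ℓ => ¬ 0 < z ℓ)
    ((Finset.filter_subset _ _).trans (Finset.filter_subset _ _)) (by
      intro x hx y hy
      rw [Finset.mem_filter] at hx hy
      obtain ⟨h1, h2, h3⟩ := hbd x hx.1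
      obtain ⟨h1', h2', h3'⟩ := hbd y hy.1
      rw [abs_of_nonpos (not_lt.1 hx.2)] at h2 h3
      rw [abs_of_nonpos (not_lt.1 hy.2)] at h2' h3'
      apply hclose x h1 y h1'
      rw [abs_lt]; constructor <;> linarith)
  have := Finset.card_filter_add_card_filter_not (s := F) (fun ℓ => 0 < z ℓ)
  have : (F.card : ℝ) = (F.filter fun ℓ => 0 < z ℓ).card + (F.filter fun ℓ => ¬ 0 < z ℓ).card := by
    exact_mod_cast this.symm
  linarith

lemma aux_W {n L : ℕ} [NeZero n] (hn : 16 ≤ n) (hL0 : 0 < L) (hL : 2 * L * L < n) (a : ZMod n)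
    (ha : a ≠ 0) :
    ‖∑ w ∈ calW n L, (ZMod.stdAddChar (a * w) : ℂ)‖
      ≤ 64 * L * (Real.log n) ^ 2 / Real.log (Real.log n) := by
  have hn0 : (0 : ℝ) < n := by positivity
  have hLn : L < n := by nlinarith
  have hl1 : 1 < Real.log n := by
    rw [Real.lt_log_iff_exp_lt hn0]
    have : (16 : ℝ) ≤ n := by exact_mod_cast hn
    linarith [Real.exp_one_lt_d9]
  have hll : 0 < Real.log (Real.log n) := Real.log_pos hl1
  set b : ℕ → ZMod n := fun ℓ => a * (ℓ : ZMod n)⁻¹ with hb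
  set z : ℕ → ℤ := fun ℓ => ℓ * (b ℓ).valMinAbs with hz
  have hmem : ∀ ℓ ∈ calL n L, L < ℓ ∧ ℓ ≤ 2 * L ∧ Nat.Coprime ℓ n := by
    intro ℓ h
    simp only [calL, Finset.mem_filter, Finset.mem_Ioc] at h
    exact ⟨h.1.1, h.1.2, h.2.2⟩
  have hza : ∀ ℓ ∈ calL n L, ((z ℓ : ℤ) : ZMod n) = a := by
    intro ℓ h
    have e1 := ZMod.coe_mul_inv_eq_one ℓ (hmem ℓ h).2.2
    simp only [hz, hb]
    rw [Int.cast_mul, ZMod.coe_valMinAbs, Int.cast_natCast]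
    linear_combination a * e1
  have hz0 : ∀ ℓ ∈ calL n L, z ℓ ≠ 0 := by
    intro ℓ h h0
    apply ha
    rw [← hza ℓ h, h0]; simp
  have hzL : ∀ ℓ ∈ calL n L, (z ℓ).natAbs ≤ L * n := by
    intro ℓ h
    simp only [hz, Int.natAbs_mul, Int.natAbs_natCast]
    have h1 := ZMod.natAbs_valMinAbs_le (b ℓ)
    calc ℓ * (b ℓ).valMinAbs.natAbs ≤ (2 * L) * (n / 2) := Nat.mul_le_mul (hmem ℓ h).2.1 h1
      _ = L * (n / 2 * 2) := by ring
      _ ≤ L * n := Nat.mul_le_mul_left _ (Nat.div_mul_le_self _ _)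
  have hzb : ∀ ℓ ∈ calL n L, (z ℓ).natAbs ≤ n ^ 2 := by
    intro ℓ h
    refine (hzL ℓ h).trans ?_
    rw [pow_two]; exact Nat.mul_le_mul_right _ hLn.le
  have hzd : ∀ ℓ ∈ calL n L, (ℓ : ℤ) ∣ z ℓ := fun ℓ _ => ⟨_, rfl⟩
  -- the bound for each prime
  have hterm : ∀ ℓ ∈ calL n L,
      ‖∑ k ∈ Finset.Icc 1 L, (ZMod.stdAddChar (b ℓ * (k : ZMod n)) : ℂ)‖
        ≤ 4 * L * (((z ℓ).natAbs / n + 1 : ℕ) : ℝ)⁻¹ := by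
    intro ℓ h
    set m := (z ℓ).natAbs / n with hm
    rcases Nat.eq_zero_or_pos m with h0 | h0
    · rw [h0]
      refine (norm_sum_le _ _).trans ?_
      simp only [AddChar.norm_apply, Finset.sum_const, Nat.card_Icc, nsmul_eq_mul]
      simp
      linarith [(Nat.cast_nonneg L : (0 : ℝ) ≤ L)]
    · have hbn : b ℓ ≠ 0 := by
        intro hb0
        apply hz0 ℓ h
        simp [hz, hb0]
      refine (aux_geom (b ℓ) hbn L).trans ?_
      have hv : 0 < |((b ℓ).valMinAbs : ℝ)| := by
        simpa using hbn
      have h1 : m * n ≤ (z ℓ).natAbs := Nat.div_mul_le_self _ _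
      have h2 : (m : ℝ) * n ≤ ℓ * |((b ℓ).valMinAbs : ℝ)| := by
        have : (m : ℝ) * n ≤ ((z ℓ).natAbs : ℝ) := by exact_mod_cast h1
        refine this.trans (le_of_eq ?_)
        simp only [hz, Int.natAbs_mul, Int.natAbs_natCast]
        rw [Nat.cast_mul, Nat.cast_natAbs]
        push_cast; rfl
      have h3 : (ℓ : ℝ) ≤ 2 * L := by exact_mod_cast (hmem ℓ h).2.1
      have h4 : (1 : ℝ) ≤ m := by exact_mod_cast h0
      rw [← div_eq_mul_inv, div_le_div_iff₀ hv (by positivity)]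
      push_cast
      have h5 : (ℓ : ℝ) * |((b ℓ).valMinAbs : ℝ)| ≤ 2 * L * |((b ℓ).valMinAbs : ℝ)| := by gcongr
      nlinarith
  have hW : ∑ w ∈ calW n L, (ZMod.stdAddChar (a * w) : ℂ)
      = ∑ ℓ ∈ calL n L, ∑ k ∈ Finset.Icc 1 L, (ZMod.stdAddChar (b ℓ * (k : ZMod n)) : ℂ) := by
    rw [calW, Finset.sum_image (aux_inj hL), Finset.sum_product_right]
    refine Finset.sum_congr rfl fun ℓ _ => Finset.sum_congr rfl fun k _ => ?_
    congr 1; simp only [hb]; ring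
  rw [hW]
  refine (norm_sum_le _ _).trans ((Finset.sum_le_sum hterm).trans ?_)
  have hmaps : ∀ ℓ ∈ calL n L, (z ℓ).natAbs / n ∈ Finset.range (L + 1) := by
    intro ℓ h
    rw [Finset.mem_range, Nat.lt_succ_iff]
    exact Nat.div_le_of_le_mul (by rw [mul_comm]; exact hzL ℓ h)
  rw [← Finset.sum_fiberwise_of_maps_to hmaps]
  set ω := 4 * Real.log n / Real.log (Real.log n) with hω
  have hω0 : 0 ≤ ω := by positivity
  calc _ ≤ ∑ m ∈ Finset.range (L + 1), (2 * ω) * (4 * L * ((m + 1 : ℕ) : ℝ)⁻¹) := by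
        refine Finset.sum_le_sum fun m _ => ?_
        rw [Finset.sum_congr rfl (g := fun _ => 4 * (L : ℝ) * ((m + 1 : ℕ) : ℝ)⁻¹)
          (fun ℓ h => by rw [(Finset.mem_filter.1 h).2])]
        rw [Finset.sum_const, nsmul_eq_mul]
        exact mul_le_mul_of_nonneg_right (aux_fib hn hLn.le a m z hz0 hza hzb hzd) (by positivity)
    _ = 8 * ω * L * ((harmonic (L + 1) : ℚ) : ℝ) := by
        rw [harmonic]
        push_cast
        rw [Finset.mul_sum]
        refine Finset.sum_congr rfl fun m _ => by ring
    _ ≤ 8 * ω * L * (2 * Real.log n) := by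
        gcongr
        refine (harmonic_le_one_add_log _).trans ?_
        have : Real.log ((L + 1 : ℕ) : ℝ) ≤ Real.log n :=
          Real.log_le_log (by positivity) (by exact_mod_cast hLn)
        linarith
    _ = 64 * L * (Real.log n) ^ 2 / Real.log (Real.log n) := by
        rw [hω]; ring

/-- There exist `C > 0` and `n₀` such that for every `n ≥ n₀`, every positive
integer `L < 0.5·n^{1/2}`, every `S ⊆ Z_n` and every `u ∈ Z_n`, the number `N(u)` of
triples `(s, t, w) ∈ S × S × W` with `s + t + w = u` satisfies
`|N(u) − (#S)² #W / n| ≤ C · L · #S · (log n)² / log log n`. -/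
theorem representation_count_asymptotic :
    ∃ C : ℝ, C > 0 ∧ ∃ n₀ : ℕ, ∀ n : ℕ, n₀ ≤ n →
      ∀ L : ℕ, 0 < L → (L : ℝ) < 0.5 * Real.sqrt n →
        ∀ S : Finset (ZMod n), ∀ u : ZMod n,
          |((((S ×ˢ S ×ˢ calW n L).filter fun p => p.1 + p.2.1 + p.2.2 = u).card : ℝ)
              - (S.card : ℝ) ^ 2 * ((calW n L).card : ℝ) / n)|
            ≤ C * L * S.card * (Real.log n) ^ 2 / Real.log (Real.log n) := by
  refine ⟨64, by norm_num, 16, ?_⟩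
  intro n hn L hL0 hL S u
  haveI : NeZero n := ⟨by omega⟩
  have hn0 : (0 : ℝ) < n := by positivity
  have hL2 : 2 * L * L < n := by
    have h1 : (L : ℝ) * L < n := by
      have h2 := Real.mul_self_sqrt hn0.le
      have h3 : (0 : ℝ) < L := by exact_mod_cast hL0
      nlinarith
    have h4 : 2 * (L : ℝ) * L < n := by
      have h2 := Real.mul_self_sqrt hn0.le
      have h3 : (0 : ℝ) < L := by exact_mod_cast hL0
      nlinarith
    exact_mod_cast h4
  have hl1 : 1 < Real.log n := by
    rw [Real.lt_log_iff_exp_lt hn0]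
    have : (16 : ℝ) ≤ n := by exact_mod_cast hn
    linarith [Real.exp_one_lt_d9]
  have hll : 0 < Real.log (Real.log n) := Real.log_pos hl1
  have := aux_main S (calW n L) u _ (fun a ha => aux_W hn hL0 hL2 a ha) (by positivity)
  refine this.trans (le_of_eq ?_)
  ring
end

section
/- For every function ψ: ℕ → ℝ with ψ(n) → ∞ as n → ∞, there exist a function φ: ℕ → ℝ with φ(n) → ∞ as n → ∞ and a constant n₀ such that for every integer n ≥ n₀ and every integer k with 1 ≤ k ≤ n, there exists a set W ⊆ Z_n with #W ≤ ψ(n) · n (log n)^{3} / (k^{1/2} · log log n) such that for every set S ⊆ Z̃_n with #S ≥ k, the number of u ∈ Z_n that cannot be written as u = s + w with s ∈ S and w ∈ W is at most n / φ(n); that is, W "almost dominates" every circulant graph C_n(S) with #S ≥ k, and W does not depend on S. -/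
open scoped Pointwise in
theorem uads_greedy {G : Type*} [AddCommGroup G] [DecidableEq G] (U S : Finset G) (t : ℕ)
    (hS : S.card = t) (m : ℕ) (hm : 2 * m * t ≤ U.card) (hU : U.Nonempty) :
    ∃ a : Fin m → G, (∀ i, a i ∈ U) ∧ m * t ≤ 2 * (Finset.univ.image a - S).card := by
  induction m with
  | zero => exact ⟨Fin.elim0, fun i => i.elim0, by simp⟩
  | succ m ih =>
    obtain ⟨a, ha, hc⟩ := ih (by nlinarith)
    set D := Finset.univ.image a - S with hD
    have hDc : D.card ≤ m * t := by
      refine (Finset.card_sub_le).trans ?_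
      rw [hS]
      refine Nat.mul_le_mul_right _ ?_
      simpa using Finset.card_image_le (s := Finset.univ) (f := a)
    have key : ∃ u ∈ U, 2 * ((({u} : Finset G) - S) ∩ D).card ≤ t := by
      by_contra! hcon
      have h1 : ∑ u ∈ U, (t + 1) ≤ ∑ u ∈ U, 2 * ((({u} : Finset G) - S) ∩ D).card :=
        Finset.sum_le_sum fun u hu => hcon u hu
      have h2 : ∑ u ∈ U, ((({u} : Finset G) - S) ∩ D).card ≤ D.card * t := by
        have e1 : ∀ u ∈ U, ((({u} : Finset G) - S) ∩ D).card
            = ∑ x ∈ D, if u - x ∈ S then 1 else 0 := by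
          intro u _
          rw [Finset.sum_boole, Nat.cast_id]
          congr 1
          ext x
          simp only [Finset.mem_inter, Finset.mem_filter, Finset.mem_sub, Finset.mem_singleton]
          constructor
          · rintro ⟨⟨_, rfl, s, hs, rfl⟩, hx⟩
            exact ⟨hx, by simpa using hs⟩
          · rintro ⟨hx, hs⟩
            exact ⟨⟨u, rfl, u - x, hs, by abel⟩, hx⟩
        rw [Finset.sum_congr rfl e1, Finset.sum_comm, ← smul_eq_mul]
        refine Finset.sum_le_card_nsmul _ _ _ fun x _ => ?_
        rw [Finset.sum_boole, Nat.cast_id, ← hS]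
        refine Finset.card_le_card_of_injOn (fun u => u - x) ?_ ?_
        · intro u hu
          simpa using (Finset.mem_filter.1 hu).2
        · intro u _ v _ h
          simpa using h
      rw [← Finset.mul_sum] at h1
      simp only [Finset.sum_const, smul_eq_mul] at h1
      have hp : 0 < U.card := hU.card_pos
      have h3 : D.card * t ≤ m * t * t := Nat.mul_le_mul_right _ hDc
      have h4 : 2 * (m + 1) * t * t ≤ U.card * t := Nat.mul_le_mul_right _ hm
      nlinarith
    obtain ⟨u, hu, hut⟩ := key
    refine ⟨Fin.cons u a, ?_, ?_⟩
    · intro i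
      refine Fin.cases ?_ ?_ i
      · simpa using hu
      · intro j
        simpa using ha j
    · have himg : Finset.univ.image (Fin.cons u a : Fin (m+1) → G)
          = {u} ∪ Finset.univ.image a := by
        ext x
        simp [Fin.exists_fin_succ, eq_comm]
      rw [himg, Finset.union_sub]
      have h5 : (({u} : Finset G) - S).card = t := by
        rw [Finset.singleton_sub, Finset.card_image_of_injective _ sub_right_injective, hS]
      have h6 := Finset.card_union_add_card_inter (({u} : Finset G) - S) D
      rw [← hD]
      rw [h5] at h6
      nlinarith

theorem uads_hit {G ι : Type*} [Fintype G] [DecidableEq G] [Nonempty G] [Fintype ι]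
    (D : ι → Finset G) (d : ℝ) (M : ℕ)
    (h : (Fintype.card ι : ℝ) * Real.exp (-(M * d / Fintype.card G)) < 1) :
    ∃ W : Finset G, W.card ≤ M ∧ ∀ i, d ≤ (D i).card → ∃ w ∈ W, w ∈ D i := by
  classical
  by_contra! hcon
  have hf : ∀ f : Fin M → G, ∃ i, d ≤ (D i).card ∧ ∀ j, f j ∈ (D i)ᶜ := by
    intro f
    obtain ⟨i, hi, hw⟩ := hcon (Finset.univ.image f)
      (by simpa using Finset.card_image_le (s := Finset.univ) (f := f))
    exact ⟨i, hi, fun j => by simpa using hw (f j) (by simp)⟩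
  set n := Fintype.card G with hn
  have hn0 : (0:ℝ) < n := by exact_mod_cast Fintype.card_pos
  have hsub : (Finset.univ : Finset (Fin M → G)) ⊆
      (Finset.univ.filter fun i => d ≤ (D i).card).biUnion
        fun i => Fintype.piFinset fun _ : Fin M => (D i)ᶜ := by
    intro f _
    obtain ⟨i, hi, hj⟩ := hf f
    simp only [Finset.mem_biUnion, Finset.mem_filter, Finset.mem_univ, true_and,
      Fintype.mem_piFinset]
    exact ⟨i, hi, hj⟩
  have hcard := (Finset.card_le_card hsub).trans Finset.card_biUnion_le
  have hcR : ((n : ℝ)) ^ M ≤ ∑ i ∈ Finset.univ.filter (fun i => d ≤ (D i).card),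
      (((D i)ᶜ.card : ℝ)) ^ M := by
    have : n ^ M ≤ ∑ i ∈ Finset.univ.filter (fun i => d ≤ (D i).card), ((D i)ᶜ.card) ^ M := by
      simpa [Fintype.card_piFinset] using hcard
    exact_mod_cast this
  have hb : ∀ i ∈ Finset.univ.filter (fun i => d ≤ ((D i).card : ℝ)),
      (((D i)ᶜ.card : ℝ)) ^ M ≤ (n:ℝ) ^ M * Real.exp (-(M * d / n)) := by
    intro i hi
    have hi := (Finset.mem_filter.1 hi).2
    have e : ((D i)ᶜ.card : ℝ) ≤ n * Real.exp (-(d / n)) := by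
      have h1 : ((D i)ᶜ.card : ℝ) = n - (D i).card := by
        rw [Finset.card_compl, Nat.cast_sub (Finset.card_le_univ _)]
      have h2 := Real.add_one_le_exp (-(d / n))
      have h3 : (n:ℝ) * (-(d/n) + 1) = n - d := by field_simp; ring
      nlinarith
    calc (((D i)ᶜ.card : ℝ)) ^ M ≤ (n * Real.exp (-(d / n))) ^ M :=
          pow_le_pow_left₀ (by positivity) e _
      _ = _ := by
          rw [mul_pow, ← Real.exp_nat_mul]
          congr 2
          ring
  have hs := hcR.trans (Finset.sum_le_card_nsmul _ _ _ hb)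
  rw [nsmul_eq_mul] at hs
  have hc : ((Finset.univ.filter (fun i => d ≤ ((D i).card : ℝ))).card : ℝ)
      ≤ Fintype.card ι := by exact_mod_cast Finset.card_le_univ _
  have hpos : (0:ℝ) < (n:ℝ)^M := by positivity
  have hE := Real.exp_pos (-(M * d / n))
  have : (n:ℝ)^M ≤ (n:ℝ)^M * (Fintype.card ι * Real.exp (-(M * d / n))) := by
    refine hs.trans ?_
    have := mul_le_mul_of_nonneg_right hc (mul_pos hpos hE).le
    linarith
  nlinarith

open scoped Pointwise in
theorem uads_core (n : ℕ) [NeZero n] (t M : ℕ) (ht : 1 ≤ t) (hn : 2 ≤ n)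
    (hM : 4 * n * Real.log n / t < M) :
    ∃ W : Finset (ZMod n), W.card ≤ M ∧ ∀ S : Finset (ZMod n), t ≤ S.card →
      ∀ U : Finset (ZMod n), 2 * t * t ≤ U.card →
        ∃ u ∈ U, ∃ s ∈ S, ∃ w ∈ W, u = s + w := by
  have hn0 : (0:ℝ) < n := by positivity
  have ht0 : (0:ℝ) < t := by exact_mod_cast ht
  obtain ⟨W, hW, hh⟩ := uads_hit (G := ZMod n) (ι := (Fin t → ZMod n) × (Fin t → ZMod n))
    (fun p => Finset.univ.image p.1 - Finset.univ.image p.2) ((t * t : ℝ) / 2) M (by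
      have hc : (Fintype.card ((Fin t → ZMod n) × (Fin t → ZMod n)) : ℝ)
          = Real.exp (2 * t * Real.log n) := by
        have : (2 * t * Real.log n) = ((t + t : ℕ) : ℝ) * Real.log n := by push_cast; ring
        rw [this, Real.exp_nat_mul, Real.exp_log hn0]
        simp [Fintype.card_prod, ZMod.card, pow_add]
      rw [hc, ← Real.exp_add, Real.exp_lt_one_iff, ZMod.card]
      rw [div_lt_iff₀ ht0] at hM
      have : 2 * t * Real.log n < M * (t * t / 2) / n := by
        rw [lt_div_iff₀ hn0]
        nlinarith
      linarith)
  refine ⟨W, hW, fun S hS U hU => ?_⟩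
  obtain ⟨S', hS'S, hS'⟩ := Finset.exists_subset_card_eq hS
  have hUne : U.Nonempty := by
    rw [← Finset.card_pos]
    nlinarith
  obtain ⟨a, ha, hac⟩ := uads_greedy U S' t hS' t hU hUne
  obtain ⟨b, hb⟩ : ∃ b : Fin t → ZMod n, Finset.univ.image b = S' := by
    refine ⟨fun i => ((S'.equivFinOfCardEq hS').symm i : ZMod n), ?_⟩
    ext x
    simp only [Finset.mem_image, Finset.mem_univ, true_and]
    constructor
    · rintro ⟨i, rfl⟩
      exact Subtype.prop _
    · intro hx
      exact ⟨S'.equivFinOfCardEq hS' ⟨x, hx⟩, by simp⟩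
  obtain ⟨w, hw, hwD⟩ := hh (a, b) (by
    simp only [hb]
    rw [div_le_iff₀ two_pos]
    have : (t * t : ℝ) ≤ 2 * (Finset.univ.image a - S').card := by exact_mod_cast hac
    linarith)
  simp only [hb] at hwD
  obtain ⟨u, hu, s, hs, rfl⟩ := Finset.mem_sub.1 hwD
  obtain ⟨i, _, rfl⟩ := Finset.mem_image.1 hu
  exact ⟨a i, ha i, s, hS'S hs, _, hw, by abel⟩

/-- For every `ψ : ℕ → ℝ` with `ψ(n) → ∞`, there exist `φ : ℕ → ℝ` with
`φ(n) → ∞` and `n₀` such that for every `n ≥ n₀` and every `1 ≤ k ≤ n` there is a set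
`W ⊆ Z_n` with `#W ≤ ψ(n) · n (log n)³ / (k^{1/2} log log n)` which almost dominates
every circulant graph `C_n(S)` with `S ⊆ Z̃_n`, `#S ≥ k`: the number of `u ∈ Z_n` not of
the form `s + w` with `s ∈ S`, `w ∈ W` is at most `n / φ(n)`. `W` does not depend on `S`. -/
theorem universal_almost_dominating_set (ψ : ℕ → ℝ)
    (hψ : Filter.Tendsto ψ Filter.atTop Filter.atTop) :
    ∃ φ : ℕ → ℝ, Filter.Tendsto φ Filter.atTop Filter.atTop ∧ ∃ n₀ : ℕ,
      ∀ n : ℕ, n₀ ≤ n → ∀ k : ℕ, 1 ≤ k → k ≤ n →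
        ∃ W : Finset (ZMod n),
          (W.card : ℝ) ≤ ψ n * n * (Real.log n) ^ 3 /
              ((k : ℝ) ^ ((1 : ℝ) / 2) * Real.log (Real.log n)) ∧
          ∀ S : Finset (ZMod n), (0 : ZMod n) ∉ S → k ≤ S.card →
            (Nat.card {u : ZMod n | ¬ ∃ s ∈ S, ∃ w ∈ W, u = s + w} : ℝ) ≤ n / φ n := by
  have hlog : Filter.Tendsto (fun n : ℕ => Real.log n) Filter.atTop Filter.atTop :=
    Real.tendsto_log_atTop.comp tendsto_natCast_atTop_atTop
  refine ⟨fun n => Real.log n / 2, hlog.atTop_div_const two_pos, ?_⟩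
  obtain ⟨n₀, hn₀⟩ := Filter.eventually_atTop.1
    ((hψ.eventually_ge_atTop 1).and ((hlog.eventually_ge_atTop 100).and
      (Filter.eventually_ge_atTop 2)))
  refine ⟨n₀, fun n hn k hk1 hkn => ?_⟩
  obtain ⟨hψ1, hL, hn2⟩ := hn₀ n hn
  have : NeZero n := ⟨by omega⟩
  set L := Real.log n with hLdef
  obtain ⟨y, hy10, hyL⟩ : ∃ y : ℝ, 10 ≤ y ∧ L = y ^ 2 :=
    ⟨√L, Real.le_sqrt_of_sq_le (by linarith), (Real.sq_sqrt (by linarith)).symm⟩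
  rw [← Real.sqrt_eq_rpow]
  obtain ⟨z, hz1, hzk, hz⟩ : ∃ z : ℝ, 1 ≤ z ∧ (k : ℝ) = z ^ 2 ∧ √(k : ℝ) = z :=
    ⟨√k, by rw [Real.one_le_sqrt]; exact_mod_cast hk1, (Real.sq_sqrt (by positivity)).symm, rfl⟩
  rw [hz]
  have hll0 : 0 < Real.log L := Real.log_pos (by linarith)
  have hll : Real.log L ≤ y ^ 2 := by
    have := Real.log_le_sub_one_of_pos (show 0 < L by linarith)
    linarith
  have hn0 : (0:ℝ) < n := by positivity
  have hy0 : (0:ℝ) < y := by linarith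
  have hz0 : (0:ℝ) < z := by linarith
  -- the size bound follows from a bound by `10 n y ^ 3 / z`
  have hsize : ∀ c : ℝ, 0 ≤ c → c * z ≤ 10 * n * y ^ 3 →
      c ≤ ψ n * n * L ^ 3 / (z * Real.log L) := by
    intro c hc hcz
    rw [le_div_iff₀ (by positivity)]
    calc c * (z * Real.log L) = (c * z) * Real.log L := by ring
      _ ≤ (10 * n * y ^ 3) * y ^ 2 := by gcongr
      _ = 10 * (n * y ^ 5) := by ring
      _ ≤ (ψ n * y) * (n * y ^ 5) := by
          gcongr
          nlinarith
      _ = ψ n * n * L ^ 3 := by rw [hyL]; ring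
  by_cases hzy : z < y
  · refine ⟨Finset.univ, ?_, ?_⟩
    · refine hsize _ (Nat.cast_nonneg _) ?_
      rw [Finset.card_univ, ZMod.card]
      have : z ≤ 10 * y ^ 3 := by nlinarith [sq_nonneg y, mul_pos hy0 hy0]
      calc (n:ℝ) * z ≤ n * (10 * y ^ 3) := by gcongr
        _ = _ := by ring
    · intro S _ hS
      obtain ⟨s, hs⟩ : S.Nonempty := Finset.card_pos.1 (by omega)
      have : {u : ZMod n | ¬ ∃ s ∈ S, ∃ w ∈ (Finset.univ : Finset (ZMod n)), u = s + w} = ∅ := by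
        ext u
        simp only [Set.mem_ofPred_eq, Set.mem_empty_iff_false, iff_false, not_not]
        exact ⟨s, hs, u - s, Finset.mem_univ _, by abel⟩
      rw [this]
      simp only [Nat.card_eq_fintype_card, Fintype.card_eq_zero, Nat.cast_zero]
      positivity
  · push Not at hzy
    have hx1 : 1 ≤ z / y := by rw [le_div_iff₀ hy0]; linarith
    set t := ⌊z / y⌋₊ with htdef
    have ht1 : 1 ≤ t := Nat.le_floor (by simpa using hx1)
    have htle : (t : ℝ) ≤ z / y := Nat.floor_le (by positivity)
    have htgt : z / y < t + 1 := Nat.lt_floor_add_one _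
    have ht1R : (1:ℝ) ≤ t := by exact_mod_cast ht1
    have hty : t * y ≤ z := by rwa [le_div_iff₀ hy0] at htle
    have hzt : z ≤ 2 * t * y := by
      rw [div_lt_iff₀ hy0] at htgt
      nlinarith
    have hknR : z ^ 2 ≤ n := by rw [← hzk]; exact_mod_cast hkn
    have htz : (t:ℝ) ≤ z := by nlinarith
    have htn : (t:ℝ) ≤ n := by nlinarith
    have htk : t ≤ k := by
      have : (t:ℝ) ≤ k := by rw [hzk]; nlinarith
      exact_mod_cast this
    obtain ⟨W, hWM, hW⟩ := uads_core n t (⌊4 * n * Real.log n / t⌋₊ + 1) ht1 hn2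
      (by push_cast; exact Nat.lt_floor_add_one _)
    refine ⟨W, hsize _ (Nat.cast_nonneg _) ?_, ?_⟩
    · have h1 : (W.card : ℝ) ≤ 4 * n * L / t + 1 := by
        have : (W.card : ℝ) ≤ (⌊4 * n * Real.log n / t⌋₊ : ℝ) + 1 := by exact_mod_cast hWM
        have h2 := Nat.floor_le (show 0 ≤ 4 * n * Real.log n / t by
          rw [← hLdef]; positivity)
        linarith
      have h2 : (W.card : ℝ) * t ≤ 5 * n * y ^ 2 := by
        calc (W.card : ℝ) * t ≤ (4 * n * L / t + 1) * t := by gcongr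
          _ = 4 * n * L + t := by field_simp
          _ ≤ 4 * n * y ^ 2 + n * y ^ 2 := by
            rw [hyL]
            have : (1:ℝ) ≤ y ^ 2 := by nlinarith
            nlinarith
          _ = _ := by ring
      calc (W.card : ℝ) * z ≤ W.card * (2 * t * y) :=
            mul_le_mul_of_nonneg_left hzt (Nat.cast_nonneg _)
        _ = (W.card * t) * (2 * y) := by ring
        _ ≤ (5 * n * y ^ 2) * (2 * y) := by gcongr
        _ = _ := by ring
    · intro S _ hS
      classical
      by_contra hcon
      set U : Finset (ZMod n) :=
        Finset.univ.filter fun u => ¬ ∃ s ∈ S, ∃ w ∈ W, u = s + w with hU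
      have hUc : Nat.card {u : ZMod n | ¬ ∃ s ∈ S, ∃ w ∈ W, u = s + w} = U.card := by
        rw [hU, Nat.card_eq_fintype_card, Fintype.card_subtype]
        rfl
      have hcon' : (n:ℝ) / (L / 2) < U.card := by
        rw [← hUc]
        exact not_le.1 hcon
      have hlt : 2 * t * t ≤ U.card := by
        have : (2 * t * t : ℝ) ≤ n / (L / 2) := by
          rw [le_div_iff₀ (by linarith), hyL]
          have : (t * y) ^ 2 ≤ z ^ 2 := by gcongr
          nlinarith
        have h3 := this.trans hcon'.le
        exact_mod_cast h3
      obtain ⟨u, hu, h⟩ := hW S (htk.trans hS) U hlt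
      exact (Finset.mem_filter.1 hu).2 h
end
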